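/- arXiv:1804.05559 — 5 statements merged into one kernel-verified Lean document; each statement's English description precedes it below -/
import Mathlib

section
/- For every integer n ≥ 3 and every index i ∈ {1,…,n-1}, the function j_i := ∂U/∂z_i is harmonic on the open upper half-space ℝ^n_+, and it satisfies the linearized boundary condition ∂j_i/∂t(z,0) + n · U(z,0)^{2/(n-2)} · j_i(z,0) = 0 for every z ∈ ℝ^{n-1}. -/
open MeasureTheory

noncomputable section

/-- Points of the upper half-space: a pair `(z, t)` with `z ∈ ℝ^{n-1}`, `t ∈ ℝ`. -/
abbrev Pt (n : ℕ) := EuclideanSpace ℝ (Fin (n - 1)) × ℝ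

/-- The standard bubble `U(z,t) = ((1+t)^2 + |z|^2)^{-(n-2)/2}`. -/
def stdBubble (n : ℕ) (p : Pt n) : ℝ :=
  ((1 + p.2) ^ 2 + ‖p.1‖ ^ 2) ^ (-(((n : ℝ) - 2) / 2))

/-- Directional (partial) derivative of `f` at `x` in the direction `v`. -/
def pd {E : Type*} [NormedAddCommGroup E] [NormedSpace ℝ E]
    (v : E) (f : E → ℝ) (x : E) : ℝ :=
  fderiv ℝ f x v

/-- The `i`-th horizontal coordinate direction. -/
def ez (n : ℕ) (i : Fin (n - 1)) : Pt n := (EuclideanSpace.single i 1, 0)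

/-- The vertical (`t`) coordinate direction. -/
def et (n : ℕ) : Pt n := (0, 1)

/-- The Euclidean Laplacian `Δf = Σ_i ∂²f/∂z_i² + ∂²f/∂t²`. -/
def lap (n : ℕ) (f : Pt n → ℝ) (p : Pt n) : ℝ :=
  (∑ i : Fin (n - 1), pd (ez n i) (pd (ez n i) f) p) + pd (et n) (pd (et n) f) p

/-
Seen from its pole `(0, -1)`, the bubble is the Newtonian potential `‖x‖ ^ (2 - n)` of `ℝⁿ`, which
is harmonic away from the origin; partial derivatives commute with the Laplacian, so every `∂ᵥU`
is harmonic too. For a horizontal direction `v` the Hessian of a power of the norm has no `⟪v, w⟫`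
term against the vertical direction `w`, so `∂ₜ∂ᵥU` is a multiple of `∂ᵥU`; the multiplier at height
`t` is `-n (1 + t) ‖x‖⁻² = -n (1 + t) U ^ (2 / (n - 2))`.
-/

open InnerProductSpace Laplacian Topology
open Module (finrank)

section PartialDerivatives

variable {E F : Type*} [NormedAddCommGroup E] [NormedSpace ℝ E]
  [NormedAddCommGroup F] [NormedSpace ℝ F] {f g : E → ℝ} {x : E}

lemma pd_congr (h : f =ᶠ[𝓝 x] g) (v : E) : pd v f x = pd v g x := by
  rw [pd, pd, h.fderiv_eq]

lemma contDiffAt_pd {m k : WithTop ℕ∞} (hf : ContDiffAt ℝ m f x) (hk : k + 1 ≤ m) (v : E) :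
    ContDiffAt ℝ k (pd v f) x :=
  (hf.fderiv_right hk).clm_apply contDiffAt_const

lemma pd_pd_eq_fderiv_fderiv (hf : ContDiffAt ℝ 2 f x) (v w : E) :
    pd w (pd v f) x = fderiv ℝ (fderiv ℝ f) x w v := by
  have hf' : DifferentiableAt ℝ (fderiv ℝ f) x :=
    (hf.fderiv_right (m := 1) one_add_one_eq_two.le).differentiableAt one_ne_zero
  have h := (hf'.hasFDerivAt.clm_apply (hasFDerivAt_const v x)).fderiv
  exact (DFunLike.congr_fun h w).trans (by simp)

lemma pd_comm (hf : ContDiffAt ℝ 2 f x) (v w : E) : pd w (pd v f) x = pd v (pd w f) x := by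
  rw [pd_pd_eq_fderiv_fderiv hf, pd_pd_eq_fderiv_fderiv hf]
  exact hf.isSymmSndFDerivAt (by simp) w v

lemma pd_sum {ι : Type*} {s : Finset ι} {φ : ι → E → ℝ}
    (hφ : ∀ k ∈ s, DifferentiableAt ℝ (φ k) x) (v : E) :
    pd v (fun y ↦ ∑ k ∈ s, φ k y) x = ∑ k ∈ s, pd v (φ k) x := by
  simp only [pd, fderiv_fun_sum hφ, sum_apply]

lemma pd_comp_sub (e : E ≃L[ℝ] F) (a v : E) (g : F → ℝ) :
    pd v (fun x ↦ g (e (x - a))) = fun x ↦ pd (e v) g (e (x - a)) := by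
  funext x
  have h : fderiv ℝ (fun y ↦ (g ∘ e) (y - a)) x = fderiv ℝ (g ∘ e) (x - a) :=
    fderiv_comp_sub a
  exact DFunLike.congr_fun (h.trans e.comp_right_fderiv) v

end PartialDerivatives

section Laplacian

variable {E : Type*} [NormedAddCommGroup E] [InnerProductSpace ℝ E] [FiniteDimensional ℝ E]
  {f : E → ℝ} {x : E}

lemma laplacian_eq_sum_pd_pd {ι : Type*} [Fintype ι] (b : OrthonormalBasis ι ℝ E)
    (hf : ContDiffAt ℝ 2 f x) : Δ f x = ∑ k, pd (b k) (pd (b k) f) x := by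
  simp [laplacian_eq_iteratedFDeriv_orthonormalBasis f b, iteratedFDeriv_two_apply,
    pd_pd_eq_fderiv_fderiv hf]

lemma laplacian_pd (hf : ContDiffAt ℝ 3 f x) (v : E) : Δ (pd v f) x = pd v (Δ f) x := by
  let b := stdOrthonormalBasis ℝ E
  have hf₂ : ∀ᶠ y in 𝓝 x, ContDiffAt ℝ 2 f y :=
    (hf.of_le (by norm_num)).eventually (by simp)
  have hpd (w : E) : ContDiffAt ℝ 2 (pd w f) x := contDiffAt_pd hf (by norm_num) w
  have hdiff (k) : DifferentiableAt ℝ (pd (b k) (pd (b k) f)) x :=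
    (contDiffAt_pd (k := 1) (hpd _) (by norm_num) _).differentiableAt one_ne_zero
  calc Δ (pd v f) x
      = ∑ k, pd (b k) (pd (b k) (pd v f)) x := laplacian_eq_sum_pd_pd b (hpd v)
    _ = ∑ k, pd (b k) (pd v (pd (b k) f)) x :=
        Finset.sum_congr rfl fun k _ ↦ pd_congr (hf₂.mono fun _ hy ↦ pd_comm hy _ _) _
    _ = ∑ k, pd v (pd (b k) (pd (b k) f)) x :=
        Finset.sum_congr rfl fun k _ ↦ pd_comm (hpd _) _ _
    _ = pd v (fun y ↦ ∑ k, pd (b k) (pd (b k) f) y) x := (pd_sum (fun k _ ↦ hdiff k) v).symm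
    _ = pd v (Δ f) x :=
        pd_congr (hf₂.mono fun _ hy ↦ (laplacian_eq_sum_pd_pd b hy).symm) v

lemma harmonicAt_pd (hf : HarmonicAt f x) (hf₃ : ContDiffAt ℝ 3 f x) (v : E) :
    HarmonicAt (pd v f) x := by
  refine ⟨contDiffAt_pd hf₃ (by norm_num) v, ?_⟩
  filter_upwards [hf₃.eventually (by simp), hf.2.eventually_nhds] with y hy₃ hy
  rw [laplacian_pd hy₃, pd_congr hy]
  simp [pd]

end Laplacian

section NormPower

variable {E : Type*} [NormedAddCommGroup E] [InnerProductSpace ℝ E] {x : E}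

lemma contDiffAt_norm_rpow {m : WithTop ℕ∞} (hx : x ≠ 0) (s : ℝ) :
    ContDiffAt ℝ m (fun y : E ↦ ‖y‖ ^ s) x :=
  (contDiffAt_norm ℝ hx).rpow_const_of_ne (norm_ne_zero_iff.mpr hx)

lemma hasFDerivAt_norm_rpow_of_ne_zero (hx : x ≠ 0) (s : ℝ) :
    HasFDerivAt (fun y : E ↦ ‖y‖ ^ s) ((s * ‖x‖ ^ (s - 2)) • innerSL ℝ x) x := by
  have hsq (y : E) (r : ℝ) : (‖y‖ ^ 2) ^ r = ‖y‖ ^ (2 * r) := by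
    rw [← Real.rpow_natCast_mul (norm_nonneg y), Nat.cast_ofNat]
  have h := (hasStrictFDerivAt_norm_sq x).hasFDerivAt.rpow_const (p := s / 2)
    (Or.inl (pow_ne_zero 2 (norm_ne_zero_iff.mpr hx)))
  simp only [hsq, mul_sub, mul_div_cancel₀ s (two_ne_zero' ℝ), mul_one] at h
  convert h using 1
  module

lemma pd_norm_rpow (hx : x ≠ 0) (s : ℝ) (v : E) :
    pd v (fun y ↦ ‖y‖ ^ s) x = s * ‖x‖ ^ (s - 2) * inner ℝ x v := by
  simp [pd, (hasFDerivAt_norm_rpow_of_ne_zero hx s).fderiv]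

lemma pd_pd_norm_rpow (hx : x ≠ 0) (s : ℝ) (v w : E) :
    pd w (pd v fun y ↦ ‖y‖ ^ s) x = s * ‖x‖ ^ (s - 2) *
      (inner ℝ v w + (s - 2) * inner ℝ x v * inner ℝ x w / ‖x‖ ^ 2) := by
  have hpow : ‖x‖ ^ (s - 2 - 2) = ‖x‖ ^ (s - 2) / ‖x‖ ^ 2 :=
    Real.rpow_sub_natCast (norm_ne_zero_iff.mpr hx) _ 2
  have h := ((hasFDerivAt_norm_rpow_of_ne_zero hx (s - 2)).const_mul s).mul
    ((hasFDerivAt_id x).inner ℝ (hasFDerivAt_const v x))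
  rw [pd_congr ((eventually_ne_nhds hx).mono fun y hy ↦ pd_norm_rpow hy s v)]
  refine (DFunLike.congr_fun h.fderiv w).trans ?_
  simp only [id_eq, hpow, add_apply, smul_apply, ContinuousLinearMap.comp_apply,
    ContinuousLinearMap.prod_apply, ContinuousLinearMap.id_apply, zero_apply, fderivInnerCLM_apply,
    inner_zero_right, real_inner_comm, zero_add, smul_eq_mul, coe_innerSL_apply]
  ring

lemma pd_pd_norm_rpow_of_inner_eq_zero (hx : x ≠ 0) (s : ℝ) {v w : E} (hvw : inner ℝ v w = 0) :
    pd w (pd v fun y ↦ ‖y‖ ^ s) x =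
      (s - 2) * inner ℝ x w / ‖x‖ ^ 2 * pd v (fun y ↦ ‖y‖ ^ s) x := by
  rw [pd_pd_norm_rpow hx, pd_norm_rpow hx, hvw]
  ring

variable [FiniteDimensional ℝ E]

lemma laplacian_norm_rpow (hx : x ≠ 0) (s : ℝ) :
    Δ (fun y : E ↦ ‖y‖ ^ s) x = s * (finrank ℝ E + s - 2) * ‖x‖ ^ (s - 2) := by
  have hx' : ‖x‖ ≠ 0 := norm_ne_zero_iff.mpr hx
  let b := stdOrthonormalBasis ℝ E
  have hparseval : ∑ k, inner ℝ x (b k) * inner ℝ x (b k) = ‖x‖ ^ 2 := by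
    simpa only [sq] using b.sum_sq_inner_left x
  calc Δ (fun y : E ↦ ‖y‖ ^ s) x
      = ∑ k, s * ‖x‖ ^ (s - 2) *
          (1 + (s - 2) * (inner ℝ x (b k) * inner ℝ x (b k)) / ‖x‖ ^ 2) := by
        simp [laplacian_eq_sum_pd_pd b (contDiffAt_norm_rpow hx s), pd_pd_norm_rpow hx, mul_assoc]
    _ = s * ‖x‖ ^ (s - 2) * (finrank ℝ E + (s - 2) * ‖x‖ ^ 2 / ‖x‖ ^ 2) := by
        simp [← hparseval, Finset.sum_add_distrib, ← Finset.mul_sum, ← Finset.sum_div]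
    _ = s * (finrank ℝ E + s - 2) * ‖x‖ ^ (s - 2) := by
        field_simp
        ring

lemma harmonicAt_norm_rpow (hx : x ≠ 0) :
    HarmonicAt (fun y : E ↦ ‖y‖ ^ (2 - finrank ℝ E : ℝ)) x := by
  refine ⟨contDiffAt_norm_rpow hx _, ?_⟩
  filter_upwards [eventually_ne_nhds hx] with y hy
  simp [laplacian_norm_rpow hy]

end NormPower

section Bubble

variable {n : ℕ}

/-- The pole `(0, -1)` of the standard bubble, its only singularity. -/
def pole (n : ℕ) : Pt n := (0, -1)

/-- The identification of `Pt n`, whose product norm is a sup norm, with the Euclidean space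
`ℝ^{n-1} × ℝ`, where inner products and `Δ` are available. -/
def toL2 (n : ℕ) : Pt n ≃L[ℝ] WithLp 2 (Pt n) :=
  (WithLp.prodContinuousLinearEquiv 2 ℝ (EuclideanSpace ℝ (Fin (n - 1))) ℝ).symm

lemma inner_toL2 (p q : Pt n) :
    inner ℝ (toL2 n p) (toL2 n q) = inner ℝ p.1 q.1 + p.2 * q.2 := by
  simp [toL2, WithLp.prod_inner_apply, mul_comm]

lemma toL2_sub_pole_ne_zero {p : Pt n} (hp : p ≠ pole n) : toL2 n (p - pole n) ≠ 0 := by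
  simpa [sub_eq_zero] using hp

lemma finrank_withLp_pt (hn : 1 ≤ n) : finrank ℝ (WithLp 2 (Pt n)) = n := by
  rw [← (toL2 n).toLinearEquiv.finrank_eq]
  simp [hn]

lemma lap_comp_toL2_sub {a p : Pt n} {g : WithLp 2 (Pt n) → ℝ}
    (hg : ContDiffAt ℝ 2 g (toL2 n (p - a))) :
    lap n (fun q ↦ g (toL2 n (q - a))) p = Δ g (toL2 n (p - a)) := by
  let b := (EuclideanSpace.basisFun (Fin (n - 1)) ℝ).prod (OrthonormalBasis.singleton Unit ℝ)
  have hz (i) : toL2 n (ez n i) = b (Sum.inl i) := by simp [b, toL2, ez]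
  have ht : toL2 n (et n) = b (Sum.inr ()) := by simp [b, toL2, et]
  simp only [lap, pd_comp_sub, hz, ht, laplacian_eq_sum_pd_pd b hg, Fintype.sum_sum_type,
    Fintype.sum_unique, PUnit.default_eq_unit]

lemma stdBubble_eq_norm_rpow (n : ℕ) :
    stdBubble n = fun p ↦ ‖toL2 n (p - pole n)‖ ^ (2 - n : ℝ) := by
  funext p
  have hsq : ‖toL2 n (p - pole n)‖ ^ 2 = (1 + p.2) ^ 2 + ‖p.1‖ ^ 2 := by
    rw [← real_inner_self_eq_norm_sq, inner_toL2]
    simp only [pole, Prod.fst_sub, sub_zero, real_inner_self_eq_norm_sq, Prod.snd_sub,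
      sub_neg_eq_add]
    ring
  rw [stdBubble, ← hsq, ← Real.rpow_natCast_mul (norm_nonneg _)]
  congr 1
  push_cast
  ring

lemma pd_stdBubble (v : Pt n) :
    pd v (stdBubble n) =
      fun p ↦ pd (toL2 n v) (fun x ↦ ‖x‖ ^ (2 - n : ℝ)) (toL2 n (p - pole n)) := by
  rw [stdBubble_eq_norm_rpow]
  exact pd_comp_sub (toL2 n) (pole n) v fun x ↦ ‖x‖ ^ (2 - n : ℝ)

lemma stdBubble_rpow_two_div (hn : n ≠ 2) (p : Pt n) :
    stdBubble n p ^ (2 / ((n : ℝ) - 2)) = (‖toL2 n (p - pole n)‖ ^ 2)⁻¹ := by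
  have hn' : (n : ℝ) - 2 ≠ 0 := sub_ne_zero.mpr (by exact_mod_cast hn)
  have hexp : (2 - n : ℝ) * (2 / (n - 2)) = -(2 : ℕ) := by
    field_simp
    push_cast
    ring
  rw [stdBubble_eq_norm_rpow, ← Real.rpow_mul (norm_nonneg _), hexp,
    Real.rpow_neg (norm_nonneg _), Real.rpow_natCast]

lemma lap_pd_stdBubble (hn : 1 ≤ n) {p : Pt n} (hp : p ≠ pole n) (v : Pt n) :
    lap n (pd v (stdBubble n)) p = 0 := by
  have hx := toL2_sub_pole_ne_zero hp
  have hharm := harmonicAt_pd (harmonicAt_norm_rpow hx) (contDiffAt_norm_rpow hx _) (toL2 n v)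
  rw [finrank_withLp_pt hn] at hharm
  rw [pd_stdBubble, lap_comp_toL2_sub hharm.1]
  exact hharm.2.self_of_nhds

lemma pd_et_pd_stdBubble (hn : n ≠ 2) {p : Pt n} (hp : p ≠ pole n) {v : Pt n} (hv : v.2 = 0) :
    pd (et n) (pd v (stdBubble n)) p =
      -(n * (1 + p.2) * stdBubble n p ^ (2 / ((n : ℝ) - 2)) * pd v (stdBubble n) p) := by
  have horth : inner ℝ (toL2 n v) (toL2 n (et n)) = 0 := by
    rw [inner_toL2]
    simp [et, hv]
  have hheight : inner ℝ (toL2 n (p - pole n)) (toL2 n (et n)) = 1 + p.2 := by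
    rw [inner_toL2]
    simp [et, pole, add_comm]
  rw [stdBubble_rpow_two_div hn, pd_stdBubble, pd_comp_sub]
  beta_reduce
  rw [pd_pd_norm_rpow_of_inner_eq_zero (toL2_sub_pole_ne_zero hp) _ horth, hheight]
  ring

theorem stmt1_general (hn : 3 ≤ n) {p : Pt n} (hp : p ≠ pole n) (v : Pt n) :
    lap n (pd v (stdBubble n)) p = 0 ∧
      (v.2 = 0 → pd (et n) (pd v (stdBubble n)) p +
        n * (1 + p.2) * stdBubble n p ^ (2 / ((n : ℝ) - 2)) * pd v (stdBubble n) p = 0) :=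
  ⟨lap_pd_stdBubble (by lia) hp v, fun hv ↦ by
    rw [pd_et_pd_stdBubble (by lia) hp hv, neg_add_cancel]⟩

end Bubble

/-- for each `i ∈ {1,…,n-1}`, `j_i = ∂U/∂z_i` is harmonic on the open
upper half-space and satisfies `∂j_i/∂t(z,0) + n U(z,0)^{2/(n-2)} j_i(z,0) = 0`. -/
theorem stmt1 (n : ℕ) (hn : 3 ≤ n) (i : Fin (n - 1)) :
    (∀ p : Pt n, 0 < p.2 → lap n (pd (ez n i) (stdBubble n)) p = 0) ∧
    (∀ z : EuclideanSpace ℝ (Fin (n - 1)),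
      pd (et n) (pd (ez n i) (stdBubble n)) (z, 0) +
        (n : ℝ) * (stdBubble n (z, 0)) ^ (2 / ((n : ℝ) - 2)) *
          pd (ez n i) (stdBubble n) (z, 0) = 0) := by
  have hp {p : Pt n} (h : 0 ≤ p.2) : p ≠ pole n := by
    rintro rfl
    norm_num [pole] at h
  exact ⟨fun p h ↦ (stmt1_general hn (hp h.le) _).1,
    fun z ↦ by simpa using (stmt1_general hn (hp (p := (z, 0)) le_rfl) (ez n i)).2 rfl⟩
end
end

section
/- For every integer n ≥ 7, the integrals I₁ = ∫_{ℝ^n_+} t² ((1+t)² + |z|²)^{-(n-2)} dz dt and I₂ = ∫_{ℝ^n_+} t² |z|⁴ ((1+t)² + |z|²)^{-n} dz dt are finite, and I₁ = (4(n-2)/(n+1)) · I₂. -/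
open MeasureTheory

noncomputable section

/-- The open upper half-space. -/
def upperHalf (n : ℕ) : Set (Pt n) := {p | 0 < p.2}

/-!
Since `d/dr [r ^ (q + 1) / (a² + r²) ^ p]` is
`(q + 1) r ^ q / (a² + r²) ^ p - 2 p r ^ (q + 2) / (a² + r²) ^ (p + 1)`, integrating over `(0, ∞)`
trades `r ^ q / (a² + r²) ^ p` for `r ^ (q + 2) / (a² + r²) ^ (p + 1)` at the price of the factor
`2 p / (q + 1)`. In polar coordinates in `z`, where `a = 1 + t`, the same holds for integrals over
the half-space with `q + 1` replaced by `dim + j`, `j` being the exponent of `‖z‖`.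
Two applications starting from `j = 0` lead from `I₁` to `I₂`.
-/

open Set Filter Module
open scoped Topology

lemma hasDerivAt_pow_succ_div_sq_add_sq_pow {a : ℝ} (ha : a ≠ 0) (q p : ℕ) (r : ℝ) :
    HasDerivAt (fun r : ℝ => r ^ (q + 1) / (a ^ 2 + r ^ 2) ^ p)
      ((q + 1) * (r ^ q / (a ^ 2 + r ^ 2) ^ p) -
        2 * p * (r ^ (q + 2) / (a ^ 2 + r ^ 2) ^ (p + 1))) r := by
  have hS : a ^ 2 + r ^ 2 ≠ 0 := by positivity
  have hderiv : HasDerivAt (fun r : ℝ => a ^ 2 + r ^ 2) (2 * r) r := by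
    simpa using (hasDerivAt_pow 2 r).const_add (a ^ 2)
  refine ((hasDerivAt_pow (q + 1) r).div (hderiv.pow p) (pow_ne_zero p hS)).congr_deriv ?_
  rcases p with _ | p
  · simp
  · simp only [Pi.pow_apply, Nat.add_sub_cancel]
    push_cast
    field_simp
    ring

lemma tendsto_pow_div_sq_add_sq_pow_atTop_zero {q p : ℕ} (h : q < 2 * p) (a : ℝ) :
    Tendsto (fun r : ℝ => r ^ q / (a ^ 2 + r ^ 2) ^ p) atTop (𝓝 0) := by
  refine squeeze_zero' ?_ ?_ (tendsto_pow_div_pow_atTop_zero (𝕜 := ℝ) h)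
  · filter_upwards [eventually_gt_atTop 0] with r hr
    positivity
  · filter_upwards [eventually_gt_atTop 0] with r hr
    rw [pow_mul]
    gcongr
    nlinarith [sq_nonneg a]

lemma one_add_norm_sq_le_of_snd_pos {E : Type*} [SeminormedAddCommGroup E] {x : E × ℝ}
    (hx : 0 < x.2) :
    (1 + ‖x‖) ^ 2 ≤ 2 * ((1 + x.2) ^ 2 + ‖x.1‖ ^ 2) := by
  rw [Prod.norm_def, Real.norm_of_nonneg hx.le]
  rcases max_choice ‖x.1‖ x.2 with hmax | hmax <;> rw [hmax]
  · nlinarith [sq_nonneg (1 - ‖x.1‖)]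
  · nlinarith [sq_nonneg ‖x.1‖]

section Integrability

variable {E : Type*} [NormedAddCommGroup E] [NormedSpace ℝ E] [FiniteDimensional ℝ E]
  [MeasurableSpace E] [BorelSpace E] (μ : Measure E) [μ.IsAddHaarMeasure]

lemma integrable_one_add_norm_pow_div_pow {k l : ℕ} (h : finrank ℝ E + k < l) :
    Integrable (fun x : E => (1 + ‖x‖) ^ k / (1 + ‖x‖) ^ l) μ := by
  have hr : (finrank ℝ E : ℝ) < (l : ℝ) - k := by
    rw [lt_sub_iff_add_lt]
    exact_mod_cast h
  refine (integrable_one_add_norm (μ := μ) hr).congr (ae_of_all _ fun x => ?_)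
  beta_reduce
  have hx : 0 < 1 + ‖x‖ := by positivity
  rw [neg_sub, Real.rpow_sub hx, Real.rpow_natCast, Real.rpow_natCast]

lemma integrable_norm_pow_div_sq_add_norm_sq_pow {a : ℝ} (ha : a ≠ 0) {j p : ℕ}
    (h : finrank ℝ E + j < 2 * p) :
    Integrable (fun z : E => ‖z‖ ^ j / (a ^ 2 + ‖z‖ ^ 2) ^ p) μ := by
  refine ((integrable_one_add_norm_pow_div_pow μ h).const_mul ((1 + (a⁻¹) ^ 2) ^ p)).mono'
    (Measurable.aestronglyMeasurable (by fun_prop)) (ae_of_all _ fun z => ?_)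
  have cauchy_schwarz : (1 + ‖z‖) ^ 2 ≤ (1 + (a⁻¹) ^ 2) * (a ^ 2 + ‖z‖ ^ 2) := by
    have : a⁻¹ * a = 1 := inv_mul_cancel₀ ha
    nlinarith [sq_nonneg (a - a⁻¹ * ‖z‖)]
  rw [Real.norm_of_nonneg (by positivity), ← mul_div_assoc, div_le_div_iff₀ (by positivity)
    (by positivity), pow_mul]
  calc ‖z‖ ^ j * ((1 + ‖z‖) ^ 2) ^ p
      ≤ (1 + ‖z‖) ^ j * ((1 + (a⁻¹) ^ 2) * (a ^ 2 + ‖z‖ ^ 2)) ^ p := by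
        gcongr
        linarith
    _ = (1 + (a⁻¹) ^ 2) ^ p * (1 + ‖z‖) ^ j * (a ^ 2 + ‖z‖ ^ 2) ^ p := by
        rw [mul_pow]
        ring

lemma integrableOn_halfSpace_pow_mul_norm_pow_div {m j p : ℕ}
    (h : finrank ℝ E + 1 + m + j < 2 * p) :
    IntegrableOn (fun x : E × ℝ => x.2 ^ m * ‖x.1‖ ^ j / ((1 + x.2) ^ 2 + ‖x.1‖ ^ 2) ^ p)
      {x | 0 < x.2} (μ.prod volume) := by
  have hdim : finrank ℝ (E × ℝ) + (m + j) < 2 * p := by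
    rw [finrank_prod, finrank_self]
    omega
  refine ((integrable_one_add_norm_pow_div_pow (μ.prod volume) hdim).const_mul
    (2 ^ p)).integrableOn.mono' (Measurable.aestronglyMeasurable (by fun_prop)) ?_
  filter_upwards [ae_restrict_mem (measurableSet_lt measurable_const measurable_snd)]
    with x (hx : 0 < x.2)
  have hfst : ‖x.1‖ ≤ 1 + ‖x‖ := by linarith [norm_fst_le x]
  have hsnd : x.2 ≤ 1 + ‖x‖ := by linarith [norm_snd_le x, Real.le_norm_self x.2]
  rw [Real.norm_of_nonneg (by positivity), ← mul_div_assoc, div_le_div_iff₀ (by positivity)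
    (by positivity), pow_mul]
  calc x.2 ^ m * ‖x.1‖ ^ j * ((1 + ‖x‖) ^ 2) ^ p
      ≤ (1 + ‖x‖) ^ m * (1 + ‖x‖) ^ j * (2 * ((1 + x.2) ^ 2 + ‖x.1‖ ^ 2)) ^ p := by
        gcongr
        exact one_add_norm_sq_le_of_snd_pos hx
    _ = 2 ^ p * (1 + ‖x‖) ^ (m + j) * ((1 + x.2) ^ 2 + ‖x.1‖ ^ 2) ^ p := by
        rw [mul_pow, pow_add]
        ring

end Integrability

lemma integrable_pow_div_sq_add_sq_pow {a : ℝ} (ha : a ≠ 0) {q p : ℕ} (h : q + 1 < 2 * p) :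
    Integrable (fun r : ℝ => r ^ q / (a ^ 2 + r ^ 2) ^ p) := by
  have hnorm := integrable_norm_pow_div_sq_add_norm_sq_pow (volume : Measure ℝ) ha
    (j := q) (p := p) (by rw [finrank_self]; omega)
  refine hnorm.mono (Measurable.aestronglyMeasurable (by fun_prop)) (ae_of_all _ fun r => ?_)
  simp

lemma integral_Ioi_pow_div_sq_add_sq_pow {a : ℝ} (ha : a ≠ 0) {q p : ℕ} (h : q + 1 < 2 * p) :
    (q + 1) * ∫ r in Ioi (0 : ℝ), r ^ q / (a ^ 2 + r ^ 2) ^ p =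
      2 * p * ∫ r in Ioi (0 : ℝ), r ^ (q + 2) / (a ^ 2 + r ^ 2) ^ (p + 1) := by
  have hint₀ := ((integrable_pow_div_sq_add_sq_pow ha h).integrableOn (s := Ioi 0)).const_mul
    ((q : ℝ) + 1)
  have hint₁ := ((integrable_pow_div_sq_add_sq_pow ha (q := q + 2) (p := p + 1)
    (by omega)).integrableOn (s := Ioi 0)).const_mul (2 * (p : ℝ))
  rw [← sub_eq_zero, ← integral_const_mul, ← integral_const_mul, ← integral_sub hint₀ hint₁,
    integral_Ioi_of_hasDerivAt_of_tendsto'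
      (fun r _ => hasDerivAt_pow_succ_div_sq_add_sq_pow ha q p r) (hint₀.sub hint₁)
      (tendsto_pow_div_sq_add_sq_pow_atTop_zero h a)]
  simp

lemma integral_halfSpace_eq_integral_Ioi_integral {α F : Type*} [MeasurableSpace α]
    [NormedAddCommGroup F] [NormedSpace ℝ F] (μ : Measure α) [SFinite μ] {f : α × ℝ → F}
    (hf : IntegrableOn f {x | 0 < x.2} (μ.prod volume)) :
    ∫ x in {x : α × ℝ | 0 < x.2}, f x ∂μ.prod volume =
      ∫ t in Ioi (0 : ℝ), ∫ z : α, f (z, t) ∂μ := by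
  have hprod : (μ.prod (volume : Measure ℝ)).restrict {x | 0 < x.2} =
      μ.prod (volume.restrict (Ioi 0)) := by
    rw [← μ.restrict_univ, Measure.prod_restrict, μ.restrict_univ, univ_prod]
    rfl
  rw [IntegrableOn, hprod] at hf
  rw [hprod, integral_prod_symm f hf]

section Reduction

variable {E : Type*} [NormedAddCommGroup E] [NormedSpace ℝ E] [FiniteDimensional ℝ E]
  [Nontrivial E] [MeasurableSpace E] [BorelSpace E] (μ : Measure E) [μ.IsAddHaarMeasure]

lemma integral_norm_pow_div_sq_add_norm_sq_pow {a : ℝ} (ha : a ≠ 0) {j p : ℕ}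
    (h : finrank ℝ E + j < 2 * p) :
    ((finrank ℝ E : ℝ) + j) * ∫ z : E, ‖z‖ ^ j / (a ^ 2 + ‖z‖ ^ 2) ^ p ∂μ =
      2 * p * ∫ z : E, ‖z‖ ^ (j + 2) / (a ^ 2 + ‖z‖ ^ 2) ^ (p + 1) ∂μ := by
  obtain ⟨d, hd⟩ : ∃ d, finrank ℝ E = d + 1 := Nat.exists_eq_add_one.2 finrank_pos
  have radial := integral_Ioi_pow_div_sq_add_sq_pow ha (q := d + j) (p := p) (by omega)
  rw [integral_fun_norm_addHaar μ (fun r : ℝ => r ^ j / (a ^ 2 + r ^ 2) ^ p),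
    integral_fun_norm_addHaar μ (fun r : ℝ => r ^ (j + 2) / (a ^ 2 + r ^ 2) ^ (p + 1)), hd]
  simp only [Nat.add_sub_cancel, smul_eq_mul, nsmul_eq_mul, ← mul_div_assoc, ← pow_add,
    ← add_assoc]
  push_cast at radial ⊢
  linear_combination ((d : ℝ) + 1) * μ.real (Metric.ball 0 1) * radial

lemma integral_halfSpace_pow_mul_norm_pow_div {m j p : ℕ}
    (h : finrank ℝ E + 1 + m + j < 2 * p) :
    ((finrank ℝ E : ℝ) + j) * ∫ x in {x : E × ℝ | 0 < x.2},
        x.2 ^ m * ‖x.1‖ ^ j / ((1 + x.2) ^ 2 + ‖x.1‖ ^ 2) ^ p ∂μ.prod volume =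
      2 * p * ∫ x in {x : E × ℝ | 0 < x.2},
        x.2 ^ m * ‖x.1‖ ^ (j + 2) / ((1 + x.2) ^ 2 + ‖x.1‖ ^ 2) ^ (p + 1) ∂μ.prod volume := by
  rw [integral_halfSpace_eq_integral_Ioi_integral μ
      (integrableOn_halfSpace_pow_mul_norm_pow_div μ h),
    integral_halfSpace_eq_integral_Ioi_integral μ
      (integrableOn_halfSpace_pow_mul_norm_pow_div μ (by omega)),
    ← integral_const_mul, ← integral_const_mul]
  refine setIntegral_congr_fun measurableSet_Ioi fun t (ht : 0 < t) => ?_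
  have slice := integral_norm_pow_div_sq_add_norm_sq_pow μ (a := 1 + t) (by positivity)
    (j := j) (p := p) (by omega)
  simp only [mul_div_assoc, integral_const_mul]
  linear_combination t ^ m * slice

end Reduction

theorem stmt4_general {E : Type*} [NormedAddCommGroup E] [NormedSpace ℝ E]
    [FiniteDimensional ℝ E] [MeasurableSpace E] [BorelSpace E] (μ : Measure E)
    [μ.IsAddHaarMeasure] {n m : ℕ} (hE : finrank ℝ E = n - 1) (hn : m + 5 ≤ n) :
    IntegrableOn (fun x : E × ℝ => x.2 ^ m / ((1 + x.2) ^ 2 + ‖x.1‖ ^ 2) ^ (n - 2))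
      {x | 0 < x.2} (μ.prod volume) ∧
    IntegrableOn (fun x : E × ℝ => x.2 ^ m * ‖x.1‖ ^ 4 / ((1 + x.2) ^ 2 + ‖x.1‖ ^ 2) ^ n)
      {x | 0 < x.2} (μ.prod volume) ∧
    ∫ x in {x : E × ℝ | 0 < x.2},
        x.2 ^ m / ((1 + x.2) ^ 2 + ‖x.1‖ ^ 2) ^ (n - 2) ∂μ.prod volume =
      4 * ((n : ℝ) - 2) / ((n : ℝ) + 1) * ∫ x in {x : E × ℝ | 0 < x.2},
        x.2 ^ m * ‖x.1‖ ^ 4 / ((1 + x.2) ^ 2 + ‖x.1‖ ^ 2) ^ n ∂μ.prod volume := by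
  obtain ⟨p, rfl⟩ : ∃ p, n = p + 2 := Nat.exists_eq_add_of_le' (by omega)
  replace hE : finrank ℝ E = p + 1 := hE
  have : Nontrivial E := nontrivial_of_finrank_pos (R := ℝ) (by omega)
  have hint₀ := integrableOn_halfSpace_pow_mul_norm_pow_div μ (m := m) (j := 0) (p := p)
    (by omega)
  have hint₄ := integrableOn_halfSpace_pow_mul_norm_pow_div μ (m := m) (j := 4) (p := p + 2)
    (by omega)
  have step₀ := integral_halfSpace_pow_mul_norm_pow_div μ (m := m) (j := 0) (p := p) (by omega)
  have step₂ := integral_halfSpace_pow_mul_norm_pow_div μ (m := m) (j := 2) (p := p + 1)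
    (by omega)
  simp only [pow_zero, mul_one, Nat.cast_zero, add_zero, zero_add] at hint₀ step₀
  refine ⟨hint₀, hint₄, ?_⟩
  rw [hE] at step₀ step₂
  push_cast at step₀ step₂ ⊢
  have hp : (p : ℝ) + 1 ≠ 0 := by positivity
  rw [div_mul_eq_mul_div, eq_div_iff (by positivity)]
  refine mul_left_cancel₀ hp ?_
  linear_combination (p + 3 : ℝ) * step₀ + 2 * (p : ℝ) * step₂

/-- for `n ≥ 7`, the integrals
`I₁ = ∫_{ℝ^n_+} t² ((1+t)²+|z|²)^{-(n-2)}` and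
`I₂ = ∫_{ℝ^n_+} t² |z|⁴ ((1+t)²+|z|²)^{-n}` are finite and
`I₁ = (4(n-2)/(n+1)) I₂`. -/
theorem stmt4 (n : ℕ) (hn : 7 ≤ n) :
    IntegrableOn
      (fun p : Pt n => p.2 ^ 2 / ((1 + p.2) ^ 2 + ‖p.1‖ ^ 2) ^ (n - 2))
      (upperHalf n) volume ∧
    IntegrableOn
      (fun p : Pt n => p.2 ^ 2 * ‖p.1‖ ^ 4 / ((1 + p.2) ^ 2 + ‖p.1‖ ^ 2) ^ n)
      (upperHalf n) volume ∧
    (∫ p in upperHalf n, p.2 ^ 2 / ((1 + p.2) ^ 2 + ‖p.1‖ ^ 2) ^ (n - 2)) =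
      (4 * ((n : ℝ) - 2) / ((n : ℝ) + 1)) *
        ∫ p in upperHalf n, p.2 ^ 2 * ‖p.1‖ ^ 4 / ((1 + p.2) ^ 2 + ‖p.1‖ ^ 2) ^ n := by
  exact stmt4_general volume (by simp) hn
end
end

section
/- For every integer n ≥ 7, the integrals I₃ = ∫_{ℝ^n_+} t⁴ |z|² ((1+t)² + |z|²)^{-n} dz dt and I₂ = ∫_{ℝ^n_+} t² |z|⁴ ((1+t)² + |z|²)^{-n} dz dt are finite, and I₃ = (12/((n-2)(n+1))) · I₂. -/
open MeasureTheory

noncomputable section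

/-!
For fixed `t`, the dilation `z ↦ (1 + t) z` separates the variables: with `d = dim E`,
`∫ t ^ j ‖z‖ ^ k / ((1 + t) ^ 2 + ‖z‖ ^ 2) ^ N` is the product of
`∫ ‖z‖ ^ k / (1 + ‖z‖ ^ 2) ^ N dz`, which in polar coordinates is a multiple of a radial moment, and
of `∫ t ^ j / (1 + t) ^ (2 N - k - d) dt`. Trading `t ^ 2` for `‖z‖ ^ 2` changes each factor by
an explicit ratio, which integration by parts on `(0, ∞)` computes.
-/

open Set Filter Topology Module

section HalfLine

lemma pow_le_one_add_pow {r : ℝ} (hr : 0 ≤ r) {a p : ℕ} (h : a ≤ p) : r ^ a ≤ (1 + r) ^ p :=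
  calc r ^ a ≤ (1 + r) ^ a := by gcongr; linarith
    _ ≤ (1 + r) ^ p := pow_le_pow_right₀ (by linarith) h

lemma pow_le_one_add_sq_pow {r : ℝ} (hr : 0 ≤ r) {a N : ℕ} (h : a ≤ 2 * N) :
    r ^ a ≤ (1 + r ^ 2) ^ N := by
  rcases le_total r 1 with h1 | h1
  · exact (pow_le_one₀ hr h1).trans (one_le_pow₀ (by nlinarith [sq_nonneg r]))
  · calc r ^ a ≤ r ^ (2 * N) := pow_le_pow_right₀ h1 h
      _ = (r ^ 2) ^ N := pow_mul _ _ _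
      _ ≤ (1 + r ^ 2) ^ N := by gcongr; linarith

variable {D : ℝ → ℝ} {a : ℕ}

lemma integrableOn_Ioi_pow_div (hD : Measurable D) (h₀ : ∀ r > 0, r ^ a ≤ D r)
    (h₂ : ∀ r > 0, r ^ (a + 2) ≤ D r) : IntegrableOn (fun r ↦ r ^ a / D r) (Ioi 0) := by
  refine Integrable.mono' (integrable_inv_one_add_sq.const_mul 2).integrableOn
    (by fun_prop : Measurable fun r ↦ r ^ a / D r).aestronglyMeasurable ?_
  filter_upwards [ae_restrict_mem measurableSet_Ioi] with r (hr : 0 < r)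
  have hDr : 0 < D r := (pow_pos hr a).trans_le (h₀ r hr)
  rw [Real.norm_of_nonneg (by positivity), ← div_eq_mul_inv, div_le_div_iff₀ hDr (by positivity)]
  linear_combination h₀ r hr + h₂ r hr

lemma tendsto_pow_div_atTop_zero (h : ∀ r > 0, r ^ (a + 1) ≤ D r) :
    Tendsto (fun r ↦ r ^ a / D r) atTop (𝓝 0) := by
  have hD : ∀ r > 0, 0 < D r := fun r hr ↦ (pow_pos hr _).trans_le (h r hr)
  refine squeeze_zero' ?_ ?_ tendsto_inv_atTop_zero
  · filter_upwards [eventually_gt_atTop 0] with r hr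
    exact div_nonneg (by positivity) (hD r hr).le
  · filter_upwards [eventually_gt_atTop 0] with r hr
    rw [div_le_iff₀ (hD r hr), le_inv_mul_iff₀ hr, ← pow_succ']
    exact h r hr

lemma succ_mul_integral_Ioi_pow_div {D' : ℝ → ℝ} (hD : ∀ r ≥ 0, HasDerivAt D (D' r) r)
    (hD₀ : ∀ r ≥ 0, D r ≠ 0) (hle : ∀ r > 0, r ^ (a + 2) ≤ D r)
    (hint : IntegrableOn (fun r ↦ r ^ a / D r) (Ioi 0))
    (hint' : IntegrableOn (fun r ↦ r ^ (a + 1) * D' r / D r ^ 2) (Ioi 0)) :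
    (a + 1) * ∫ r in Ioi 0, r ^ a / D r = ∫ r in Ioi 0, r ^ (a + 1) * D' r / D r ^ 2 := by
  have hderiv : ∀ r ∈ Ici (0 : ℝ), HasDerivAt (fun r ↦ r ^ (a + 1) / D r)
      ((a + 1) * (r ^ a / D r) - r ^ (a + 1) * D' r / D r ^ 2) r := fun r hr ↦ by
    refine ((hasDerivAt_pow (a + 1) r).div (hD r hr) (hD₀ r hr)).congr_deriv ?_
    have := hD₀ r hr
    push_cast
    field_simp
  have hftc := integral_Ioi_of_hasDerivAt_of_tendsto' hderiv
    ((hint.const_mul _).sub hint') (tendsto_pow_div_atTop_zero hle)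
  rw [integral_sub (hint.const_mul _) hint', integral_const_mul] at hftc
  simpa [sub_eq_zero] using hftc

end HalfLine

section Moments

/-- The radial moment `∫₀^∞ r ^ a / (1 + r ^ 2) ^ N dr`, often written `I_N^a` in the literature on
the Yamabe problem. It is finite, hence meaningful, for `a + 2 ≤ 2 * N`. -/
def radialMoment (a N : ℕ) : ℝ := ∫ r in Ioi (0 : ℝ), r ^ a / (1 + r ^ 2) ^ N

/-- The moment `∫₀^∞ t ^ a / (1 + t) ^ p dt` in the height variable of the half-space. It is
finite, hence meaningful, for `a + 2 ≤ p`. -/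
def heightMoment (a p : ℕ) : ℝ := ∫ t in Ioi (0 : ℝ), t ^ a / (1 + t) ^ p

variable {a N p : ℕ}

lemma integrableOn_pow_div_one_add_sq_pow (h : a + 2 ≤ 2 * N) :
    IntegrableOn (fun r : ℝ ↦ r ^ a / (1 + r ^ 2) ^ N) (Ioi 0) :=
  integrableOn_Ioi_pow_div (by fun_prop) (fun _ hr ↦ pow_le_one_add_sq_pow hr.le (by omega))
    fun _ hr ↦ pow_le_one_add_sq_pow hr.le h

lemma integrableOn_pow_div_one_add_pow (h : a + 2 ≤ p) :
    IntegrableOn (fun t : ℝ ↦ t ^ a / (1 + t) ^ p) (Ioi 0) :=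
  integrableOn_Ioi_pow_div (by fun_prop) (fun _ ht ↦ pow_le_one_add_pow ht.le (by omega))
    fun _ ht ↦ pow_le_one_add_pow ht.le h

lemma radialMoment_eq_add (h : a + 2 ≤ 2 * N) :
    radialMoment a N = radialMoment a (N + 1) + radialMoment (a + 2) (N + 1) := by
  unfold radialMoment
  rw [← integral_add (integrableOn_pow_div_one_add_sq_pow (by omega))
    (integrableOn_pow_div_one_add_sq_pow (by omega))]
  congr! 2 with r
  field_simp
  ring

lemma succ_mul_radialMoment (h : a + 2 ≤ 2 * N) :
    (a + 1) * radialMoment a N = 2 * N * radialMoment (a + 2) (N + 1) := by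
  have hderiv (r : ℝ) : HasDerivAt (fun r : ℝ ↦ (1 + r ^ 2) ^ N)
      (N * (1 + r ^ 2) ^ (N - 1) * (2 * r)) r := by
    simpa using ((hasDerivAt_pow 2 r).const_add 1).fun_pow N
  have hquot (r : ℝ) : r ^ (a + 1) * (N * (1 + r ^ 2) ^ (N - 1) * (2 * r)) / ((1 + r ^ 2) ^ N) ^ 2 =
      2 * N * (r ^ (a + 2) / (1 + r ^ 2) ^ (N + 1)) := by
    obtain ⟨M, rfl⟩ : ∃ M, N = M + 1 := ⟨N - 1, by omega⟩
    rw [Nat.add_sub_cancel]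
    field_simp
    ring
  have hparts := succ_mul_integral_Ioi_pow_div (fun r _ ↦ hderiv r) (fun r _ ↦ by positivity)
    (fun r hr ↦ pow_le_one_add_sq_pow hr.le h) (integrableOn_pow_div_one_add_sq_pow h)
    (by simp only [hquot]; exact (integrableOn_pow_div_one_add_sq_pow (by omega)).const_mul _)
  simpa only [hquot, integral_const_mul, radialMoment] using hparts

lemma succ_mul_radialMoment_succ (h : a + 2 ≤ 2 * N) :
    (a + 1) * radialMoment a (N + 1) = (2 * N - a - 1) * radialMoment (a + 2) (N + 1) := by
  linear_combination succ_mul_radialMoment h - (a + 1) * radialMoment_eq_add h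

lemma mul_heightMoment_succ (h : a + 2 ≤ p) :
    p * heightMoment (a + 1) (p + 1) = (a + 1) * heightMoment a p := by
  have hderiv (t : ℝ) : HasDerivAt (fun t : ℝ ↦ (1 + t) ^ p) (p * (1 + t) ^ (p - 1)) t := by
    simpa using ((hasDerivAt_id t).const_add 1).fun_pow p
  have hquot : ∀ t ∈ Ioi (0 : ℝ), t ^ (a + 1) * (p * (1 + t) ^ (p - 1)) / ((1 + t) ^ p) ^ 2 =
      p * (t ^ (a + 1) / (1 + t) ^ (p + 1)) := fun t (ht : 0 < t) ↦ by
    obtain ⟨q, rfl⟩ : ∃ q, p = q + 1 := ⟨p - 1, by omega⟩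
    rw [Nat.add_sub_cancel]
    field_simp
    ring
  have hparts := succ_mul_integral_Ioi_pow_div (fun t _ ↦ hderiv t)
    (fun t ht ↦ pow_ne_zero _ (by positivity)) (fun t ht ↦ pow_le_one_add_pow ht.le h)
    (integrableOn_pow_div_one_add_pow h)
    (IntegrableOn.congr_fun ((integrableOn_pow_div_one_add_pow (by omega)).const_mul _)
      (fun t ht ↦ (hquot t ht).symm) measurableSet_Ioi)
  rw [setIntegral_congr_fun measurableSet_Ioi hquot, integral_const_mul] at hparts
  exact hparts.symm

lemma mul_heightMoment_add_two (h : a + 2 ≤ p) :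
    (p + 1) * p * heightMoment (a + 2) (p + 2) = (a + 2) * (a + 1) * heightMoment a p := by
  have hsucc := mul_heightMoment_succ (show a + 1 + 2 ≤ p + 1 by omega)
  push_cast at hsucc
  linear_combination p * hsucc + (a + 2) * mul_heightMoment_succ h

end Moments

lemma prod_volume_restrict_snd_pos {α : Type*} [MeasurableSpace α] (μ : Measure α) [SFinite μ] :
    (μ.prod volume).restrict {q : α × ℝ | 0 < q.2} = μ.prod (volume.restrict (Ioi 0)) := by
  have hset : {q : α × ℝ | 0 < q.2} = univ ×ˢ Ioi 0 := by ext; simp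
  rw [hset, ← Measure.prod_restrict, Measure.restrict_univ]

section NormedSpace

variable {E : Type*} [NormedAddCommGroup E] [NormedSpace ℝ E] {j k N p : ℕ}

lemma norm_pow_div_sq_add_norm_sq_pow {s : ℝ} (hs : 0 < s) (z : E) :
    ‖z‖ ^ k / (s ^ 2 + ‖z‖ ^ 2) ^ N =
      s ^ k / s ^ (2 * N) * (‖s⁻¹ • z‖ ^ k / (1 + ‖s⁻¹ • z‖ ^ 2) ^ N) := by
  have hz : ‖z‖ = s * ‖s⁻¹ • z‖ := by
    rw [norm_smul, norm_inv, Real.norm_of_nonneg hs.le, mul_inv_cancel_left₀ hs.ne']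
  have hsq : s ^ 2 + (s * ‖s⁻¹ • z‖) ^ 2 = s ^ 2 * (1 + ‖s⁻¹ • z‖ ^ 2) := by ring
  calc ‖z‖ ^ k / (s ^ 2 + ‖z‖ ^ 2) ^ N
      = (s * ‖s⁻¹ • z‖) ^ k / (s ^ 2 + (s * ‖s⁻¹ • z‖) ^ 2) ^ N := by rw [← hz]
    _ = _ := by rw [hsq, mul_pow, mul_pow, ← pow_mul, mul_div_mul_comm]

variable [FiniteDimensional ℝ E] [MeasurableSpace E] [BorelSpace E] (μ : Measure E)
  [μ.IsAddHaarMeasure]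

variable {μ} in
lemma integrable_norm_pow_div_sq_add_norm_sq_pow_s5 {s : ℝ} (hs : 0 < s)
    (h : Integrable (fun z : E ↦ ‖z‖ ^ k / (1 + ‖z‖ ^ 2) ^ N) μ) :
    Integrable (fun z : E ↦ ‖z‖ ^ k / (s ^ 2 + ‖z‖ ^ 2) ^ N) μ := by
  simp only [norm_pow_div_sq_add_norm_sq_pow hs]
  exact (h.comp_smul (inv_ne_zero hs.ne')).const_mul _

lemma integral_norm_pow_div_sq_add_norm_sq_pow_s5 {s : ℝ} (hs : 0 < s)
    (hp : finrank ℝ E + k + p = 2 * N) :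
    ∫ z, ‖z‖ ^ k / (s ^ 2 + ‖z‖ ^ 2) ^ N ∂μ =
      (∫ z, ‖z‖ ^ k / (1 + ‖z‖ ^ 2) ^ N ∂μ) / s ^ p := by
  simp only [norm_pow_div_sq_add_norm_sq_pow hs]
  rw [integral_const_mul, Measure.integral_comp_inv_smul_of_nonneg μ
    (fun z ↦ ‖z‖ ^ k / (1 + ‖z‖ ^ 2) ^ N) hs.le, ← hp, smul_eq_mul]
  field_simp
  ring

lemma integral_pow_mul_norm_pow_div {t : ℝ} (ht : 0 < t)
    (hp : finrank ℝ E + k + p = 2 * N) :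
    ∫ z, t ^ j * ‖z‖ ^ k / ((1 + t) ^ 2 + ‖z‖ ^ 2) ^ N ∂μ =
      (∫ z, ‖z‖ ^ k / (1 + ‖z‖ ^ 2) ^ N ∂μ) * (t ^ j / (1 + t) ^ p) := by
  simp only [mul_div_assoc]
  rw [integral_const_mul, integral_norm_pow_div_sq_add_norm_sq_pow_s5 μ (by positivity) hp]
  ring

variable [Nontrivial E]

lemma integrable_norm_pow_div_one_add_norm_sq_pow (h : finrank ℝ E + k + 1 ≤ 2 * N) :
    Integrable (fun z : E ↦ ‖z‖ ^ k / (1 + ‖z‖ ^ 2) ^ N) μ := by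
  have hd : 0 < finrank ℝ E := finrank_pos
  rw [integrable_fun_norm_addHaar μ (f := fun r ↦ r ^ k / (1 + r ^ 2) ^ N)]
  simp only [smul_eq_mul, ← mul_div_assoc, ← pow_add]
  exact integrableOn_pow_div_one_add_sq_pow (by omega)

lemma integral_norm_pow_div_one_add_norm_sq_pow :
    ∫ z, ‖z‖ ^ k / (1 + ‖z‖ ^ 2) ^ N ∂μ =
      finrank ℝ E * μ.real (Metric.ball 0 1) * radialMoment (finrank ℝ E - 1 + k) N := by
  rw [integral_fun_norm_addHaar μ (fun r ↦ r ^ k / (1 + r ^ 2) ^ N), radialMoment]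
  simp only [nsmul_eq_mul, smul_eq_mul, ← mul_div_assoc, ← pow_add, mul_assoc]

lemma add_mul_integral_norm_pow_div_one_add_norm_sq_pow (h : finrank ℝ E + k + 3 ≤ 2 * N) :
    (finrank ℝ E + k : ℝ) * ∫ z, ‖z‖ ^ k / (1 + ‖z‖ ^ 2) ^ N ∂μ =
      (2 * N - finrank ℝ E - k - 2 : ℝ) * ∫ z, ‖z‖ ^ (k + 2) / (1 + ‖z‖ ^ 2) ^ N ∂μ := by
  obtain ⟨M, rfl⟩ : ∃ M, N = M + 1 := ⟨N - 1, by omega⟩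
  obtain ⟨m, hm⟩ : ∃ m, finrank ℝ E = m + 1 := ⟨_, (Nat.succ_pred finrank_pos.ne').symm⟩
  have hrad := succ_mul_radialMoment_succ (a := m + k) (N := M) (by omega)
  simp only [integral_norm_pow_div_one_add_norm_sq_pow, hm, Nat.add_sub_cancel, ← add_assoc]
  push_cast at hrad ⊢
  linear_combination (m + 1) * μ.real (Metric.ball 0 1) * hrad

lemma integrableOn_snd_pow_mul_norm_fst_pow_div (hp : finrank ℝ E + k + p = 2 * N)
    (hj : j + 2 ≤ p) :
    IntegrableOn (fun q : E × ℝ ↦ q.2 ^ j * ‖q.1‖ ^ k / ((1 + q.2) ^ 2 + ‖q.1‖ ^ 2) ^ N)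
      {q | 0 < q.2} (μ.prod volume) := by
  rw [IntegrableOn, prod_volume_restrict_snd_pos, integrable_prod_iff'
    (by fun_prop : Measurable fun q : E × ℝ ↦
      q.2 ^ j * ‖q.1‖ ^ k / ((1 + q.2) ^ 2 + ‖q.1‖ ^ 2) ^ N).aestronglyMeasurable]
  constructor
  · filter_upwards [ae_restrict_mem measurableSet_Ioi] with t (ht : 0 < t)
    simp only [mul_div_assoc]
    exact (integrable_norm_pow_div_sq_add_norm_sq_pow_s5 (by positivity)
      (integrable_norm_pow_div_one_add_norm_sq_pow μ (by omega))).const_mul _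
  · refine IntegrableOn.congr_fun ((integrableOn_pow_div_one_add_pow hj).const_mul
      (∫ z, ‖z‖ ^ k / (1 + ‖z‖ ^ 2) ^ N ∂μ)) (fun t (ht : 0 < t) ↦ ?_) measurableSet_Ioi
    rw [← integral_pow_mul_norm_pow_div μ ht hp]
    congr! 2 with z
    exact (Real.norm_of_nonneg (by positivity)).symm

lemma setIntegral_snd_pow_mul_norm_fst_pow_div (hp : finrank ℝ E + k + p = 2 * N)
    (hj : j + 2 ≤ p) :
    ∫ q in {q : E × ℝ | 0 < q.2},
        q.2 ^ j * ‖q.1‖ ^ k / ((1 + q.2) ^ 2 + ‖q.1‖ ^ 2) ^ N ∂μ.prod volume =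
      (∫ z, ‖z‖ ^ k / (1 + ‖z‖ ^ 2) ^ N ∂μ) * heightMoment j p := by
  have hint := integrableOn_snd_pow_mul_norm_fst_pow_div μ hp hj
  rw [IntegrableOn, prod_volume_restrict_snd_pos] at hint
  rw [prod_volume_restrict_snd_pos, integral_prod_symm _ hint, setIntegral_congr_fun
    measurableSet_Ioi fun t ht ↦ integral_pow_mul_norm_pow_div μ ht hp,
    integral_const_mul, heightMoment]

theorem stmt5_general (j k N : ℕ) (h : finrank ℝ E + j + k + 4 ≤ 2 * N) :
    IntegrableOn
      (fun q : E × ℝ ↦ q.2 ^ (j + 2) * ‖q.1‖ ^ k / ((1 + q.2) ^ 2 + ‖q.1‖ ^ 2) ^ N)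
      {q | 0 < q.2} (μ.prod volume) ∧
    IntegrableOn
      (fun q : E × ℝ ↦ q.2 ^ j * ‖q.1‖ ^ (k + 2) / ((1 + q.2) ^ 2 + ‖q.1‖ ^ 2) ^ N)
      {q | 0 < q.2} (μ.prod volume) ∧
    ∫ q in {q : E × ℝ | 0 < q.2},
        q.2 ^ (j + 2) * ‖q.1‖ ^ k / ((1 + q.2) ^ 2 + ‖q.1‖ ^ 2) ^ N ∂μ.prod volume =
      ((j + 2) * (j + 1) / ((2 * N - finrank ℝ E - k - 1) * (finrank ℝ E + k)) : ℝ) *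
        ∫ q in {q : E × ℝ | 0 < q.2},
          q.2 ^ j * ‖q.1‖ ^ (k + 2) / ((1 + q.2) ^ 2 + ‖q.1‖ ^ 2) ^ N ∂μ.prod volume := by
  obtain ⟨p, hp⟩ : ∃ p, finrank ℝ E + k + 2 + p = 2 * N := ⟨2 * N - (finrank ℝ E + k + 2), by omega⟩
  have hp₁ : finrank ℝ E + k + (p + 2) = 2 * N := by omega
  have hp₂ : finrank ℝ E + (k + 2) + p = 2 * N := by omega
  refine ⟨integrableOn_snd_pow_mul_norm_fst_pow_div μ hp₁ (by omega),
    integrableOn_snd_pow_mul_norm_fst_pow_div μ hp₂ (by omega), ?_⟩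
  rw [setIntegral_snd_pow_mul_norm_fst_pow_div μ hp₁ (by omega),
    setIntegral_snd_pow_mul_norm_fst_pow_div μ hp₂ (by omega)]
  have hnorm := add_mul_integral_norm_pow_div_one_add_norm_sq_pow μ (k := k) (N := N) (by omega)
  have hheight := mul_heightMoment_add_two (a := j) (p := p) (by omega)
  have hN : (2 * N : ℝ) = finrank ℝ E + k + 2 + p := mod_cast hp.symm
  have hd : (0 : ℝ) < finrank ℝ E := mod_cast finrank_pos
  have hp₀ : (0 : ℝ) < p := mod_cast (by omega : 0 < p)
  rw [show (2 * N - finrank ℝ E - k - 2 : ℝ) = p by linear_combination hN] at hnorm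
  rw [show (2 * N - finrank ℝ E - k - 1 : ℝ) = p + 1 by linear_combination hN,
    div_mul_eq_mul_div, eq_div_iff (by positivity)]
  refine mul_left_cancel₀ hp₀.ne' ?_
  linear_combination (p + 1) * p * heightMoment (j + 2) (p + 2) * hnorm +
    p * (∫ z, ‖z‖ ^ (k + 2) / (1 + ‖z‖ ^ 2) ^ N ∂μ) * hheight

end NormedSpace

/-- for `n ≥ 7`, the integrals
`I₃ = ∫_{ℝ^n_+} t⁴ |z|² ((1+t)²+|z|²)^{-n}` and
`I₂ = ∫_{ℝ^n_+} t² |z|⁴ ((1+t)²+|z|²)^{-n}` are finite and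
`I₃ = (12/((n-2)(n+1))) I₂`. -/
theorem stmt5 (n : ℕ) (hn : 7 ≤ n) :
    IntegrableOn
      (fun p : Pt n => p.2 ^ 4 * ‖p.1‖ ^ 2 / ((1 + p.2) ^ 2 + ‖p.1‖ ^ 2) ^ n)
      (upperHalf n) volume ∧
    IntegrableOn
      (fun p : Pt n => p.2 ^ 2 * ‖p.1‖ ^ 4 / ((1 + p.2) ^ 2 + ‖p.1‖ ^ 2) ^ n)
      (upperHalf n) volume ∧
    (∫ p in upperHalf n, p.2 ^ 4 * ‖p.1‖ ^ 2 / ((1 + p.2) ^ 2 + ‖p.1‖ ^ 2) ^ n) =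
      (12 / (((n : ℝ) - 2) * ((n : ℝ) + 1))) *
        ∫ p in upperHalf n, p.2 ^ 2 * ‖p.1‖ ^ 4 / ((1 + p.2) ^ 2 + ‖p.1‖ ^ 2) ^ n := by
  have : Nonempty (Fin (n - 1)) := ⟨⟨0, by omega⟩⟩
  have hd : finrank ℝ (EuclideanSpace ℝ (Fin (n - 1))) = n - 1 := finrank_euclideanSpace_fin
  obtain ⟨h₃, h₂, heq⟩ := stmt5_general (volume : Measure (EuclideanSpace ℝ (Fin (n - 1)))) 2 2 n
    (by omega)
  refine ⟨h₃, h₂, heq.trans (congrArg (· * _) ?_)⟩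
  rw [hd, Nat.cast_pred (by omega)]
  push_cast
  ring
end
end

section
/- Let n ≥ 4 be an integer and let A_{ikjl} and B_{ij} (1 ≤ i,j,k,l ≤ n-1) be arbitrary real constants. Then for every m ∈ {1,…,n-1}, ∫_{ℝ^n_+} f_{A,B}(y) · ∂U/∂z_m(y) dy = 0. -/
open MeasureTheory

noncomputable section

/-- `f_{A,B}(y) = Σ_{i,j} ((1/3) Σ_{k,l} A_{ikjl} y_k y_l + B_{ij} y_n²) ∂²U/∂y_i∂y_j`. -/
def fAB (n : ℕ) (A : Fin (n - 1) → Fin (n - 1) → Fin (n - 1) → Fin (n - 1) → ℝ)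
    (B : Fin (n - 1) → Fin (n - 1) → ℝ) (p : Pt n) : ℝ :=
  ∑ i : Fin (n - 1), ∑ j : Fin (n - 1),
    ((1 / 3) * (∑ k : Fin (n - 1), ∑ l : Fin (n - 1), A i k j l * p.1 k * p.1 l) +
        B i j * p.2 ^ 2) *
      pd (ez n i) (pd (ez n j) (stdBubble n)) p

/-!
The reflection `(z, t) ↦ (-z, t)` preserves Lebesgue measure, the half-space and `U`. Each
horizontal derivative reverses parity under it, so `f_{A,B}` is even (its coefficients are quadratic
in `z`) while `∂U/∂z_m` is odd, and an odd function integrates to zero.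
-/

theorem setIntegral_eq_zero_of_comp_eq_neg {α F : Type*} [MeasurableSpace α]
    [NormedAddCommGroup F] [NormedSpace ℝ F] {μ : Measure α} {σ : α → α} {s : Set α} {f : α → F}
    (hσ : MeasurePreserving σ μ μ) (hemb : MeasurableEmbedding σ) (hs : σ ⁻¹' s = s)
    (hf : f ∘ σ = -f) : ∫ x in s, f x ∂μ = 0 := by
  have hneg : ∫ x in s, f x ∂μ = -∫ x in s, f x ∂μ :=
    calc ∫ x in s, f x ∂μ
        = ∫ x in σ ⁻¹' s, (f ∘ σ) x ∂μ := (hσ.setIntegral_preimage_emb hemb f s).symm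
      _ = ∫ x in s, -f x ∂μ := by rw [hs, hf]; rfl
      _ = -∫ x in s, f x ∂μ := integral_neg _
  have := IsAddTorsionFree.of_isTorsionFree ℝ F
  exact self_eq_neg.mp hneg

section DirectionalDerivative

variable {E E' : Type*} [NormedAddCommGroup E] [NormedSpace ℝ E]
  [NormedAddCommGroup E'] [NormedSpace ℝ E']

theorem pd_neg_direction (v : E) (f : E → ℝ) : pd (-v) f = -pd v f :=
  funext fun x ↦ map_neg (fderiv ℝ f x) v

theorem pd_neg (v : E) (f : E → ℝ) : pd v (-f) = -pd v f := by
  ext x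
  simp only [pd, fderiv_neg, neg_apply, Pi.neg_apply]

theorem pd_comp_continuousLinearEquiv (e : E ≃L[ℝ] E') (v : E) (f : E' → ℝ) :
    pd v (f ∘ e) = pd (e v) f ∘ e := by
  ext x
  simp only [pd, e.comp_right_fderiv, ContinuousLinearMap.comp_apply,
    ContinuousLinearEquiv.coe_coe, Function.comp_apply]

variable {e : E ≃L[ℝ] E} {v : E} {f : E → ℝ}

theorem pd_comp_eq_neg_of_comp_eq_self (hv : e v = -v) (hf : f ∘ e = f) :
    pd v f ∘ e = -pd v f := by
  have h := pd_comp_continuousLinearEquiv e v f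
  rw [hf, hv, pd_neg_direction] at h
  exact neg_eq_iff_eq_neg.mp h.symm

theorem pd_comp_eq_self_of_comp_eq_neg (hv : e v = -v) (hf : f ∘ e = -f) :
    pd v f ∘ e = pd v f := by
  have h := pd_comp_continuousLinearEquiv e v f
  rw [hf, hv, pd_neg_direction, pd_neg] at h
  exact (neg_injective h).symm

end DirectionalDerivative

section HorizontalReflection

/-- The reflection `(z, t) ↦ (-z, t)` in the first factor of a product. With `E = ℝ^{n-1}` and
`F = ℝ` it is the symmetry of the half-space that exhibits the integrand as an odd function. -/
def horizontalReflection (E F : Type*) [NormedAddCommGroup E] [NormedSpace ℝ E]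
    [NormedAddCommGroup F] [NormedSpace ℝ F] : (E × F) ≃L[ℝ] (E × F) :=
  (ContinuousLinearEquiv.neg ℝ).prodCongr (ContinuousLinearEquiv.refl ℝ F)

variable {E F : Type*} [NormedAddCommGroup E] [NormedSpace ℝ E]
  [NormedAddCommGroup F] [NormedSpace ℝ F]

@[simp]
theorem horizontalReflection_apply (p : E × F) :
    horizontalReflection E F p = (-p.1, p.2) :=
  rfl

theorem measurePreserving_horizontalReflection [MeasurableSpace E] [MeasurableNeg E]
    [MeasurableSpace F] (μ : Measure E) [SFinite μ] [μ.IsNegInvariant] (ν : Measure F)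
    [SFinite ν] :
    MeasurePreserving (horizontalReflection E F) (μ.prod ν) (μ.prod ν) :=
  (Measure.measurePreserving_neg μ).prod (MeasurePreserving.id ν)

end HorizontalReflection

section Bubble

variable (n : ℕ)

/-- The horizontal reflection `(z, t) ↦ (-z, t)` on the ambient space `Pt n` of the half-space. -/
abbrev ptReflection : Pt n ≃L[ℝ] Pt n :=
  horizontalReflection (EuclideanSpace ℝ (Fin (n - 1))) ℝ

theorem ptReflection_ez (i : Fin (n - 1)) : ptReflection n (ez n i) = -ez n i := by
  simp [ez]

theorem ptReflection_preimage_upperHalf : ptReflection n ⁻¹' upperHalf n = upperHalf n :=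
  rfl

theorem stdBubble_comp_ptReflection : stdBubble n ∘ ptReflection n = stdBubble n := by
  ext p
  simp [stdBubble]

theorem pd_stdBubble_comp_ptReflection (i : Fin (n - 1)) :
    pd (ez n i) (stdBubble n) ∘ ptReflection n = -pd (ez n i) (stdBubble n) :=
  pd_comp_eq_neg_of_comp_eq_self (ptReflection_ez n i) (stdBubble_comp_ptReflection n)

theorem pd_pd_stdBubble_comp_ptReflection (i j : Fin (n - 1)) :
    pd (ez n i) (pd (ez n j) (stdBubble n)) ∘ ptReflection n =
      pd (ez n i) (pd (ez n j) (stdBubble n)) :=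
  pd_comp_eq_self_of_comp_eq_neg (ptReflection_ez n i) (pd_stdBubble_comp_ptReflection n j)

theorem fAB_comp_ptReflection
    (A : Fin (n - 1) → Fin (n - 1) → Fin (n - 1) → Fin (n - 1) → ℝ)
    (B : Fin (n - 1) → Fin (n - 1) → ℝ) :
    fAB n A B ∘ ptReflection n = fAB n A B := by
  ext p
  have hpd (i j : Fin (n - 1)) : pd (ez n i) (pd (ez n j) (stdBubble n)) (ptReflection n p) =
      pd (ez n i) (pd (ez n j) (stdBubble n)) p :=
    congrFun (pd_pd_stdBubble_comp_ptReflection n i j) p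
  have hcoeff (i j k l : Fin (n - 1)) :
      A i k j l * (ptReflection n p).1 k * (ptReflection n p).1 l = A i k j l * p.1 k * p.1 l := by
    simp
  have hvert : (ptReflection n p).2 = p.2 := rfl
  simp only [Function.comp_apply, fAB, hpd, hcoeff, hvert]

end Bubble

/-- for arbitrary constants `A`, `B` and every `m ∈ {1,…,n-1}`,
`∫_{ℝ^n_+} f_{A,B}(y) ∂U/∂z_m(y) dy = 0`. -/
theorem stmt7 (n : ℕ) (hn : 4 ≤ n)
    (A : Fin (n - 1) → Fin (n - 1) → Fin (n - 1) → Fin (n - 1) → ℝ)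
    (B : Fin (n - 1) → Fin (n - 1) → ℝ) (m : Fin (n - 1)) :
    (∫ p in upperHalf n, fAB n A B p * pd (ez n m) (stdBubble n) p) = 0 := by
  have hodd : (fAB n A B * pd (ez n m) (stdBubble n)) ∘ ptReflection n =
      -(fAB n A B * pd (ez n m) (stdBubble n)) := by
    rw [Pi.mul_comp, fAB_comp_ptReflection, pd_stdBubble_comp_ptReflection, mul_neg]
  exact setIntegral_eq_zero_of_comp_eq_neg
    (measurePreserving_horizontalReflection volume volume)
    (ptReflection n).toHomeomorph.measurableEmbedding
    (ptReflection_preimage_upperHalf n) hodd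
end
end

section
/- Let n ≥ 5 be an integer and let A_{ikjl} and B_{ij} (1 ≤ i,j,k,l ≤ n-1) be real constants satisfying A_{ikjl} = -A_{kijl} and A_{ikjl} = -A_{iklj} for all indices, Σ_{i,k=1}^{n-1} A_{ikik} = 0, and Σ_{i=1}^{n-1} B_{ii} = 0. Then ∫_{ℝ^n_+} f_{A,B}(y) · U(y) dy = 0 and ∫_{ℝ^n_+} f_{A,B}(y) · j_n(y) dy = 0, where j_n = ((n-2)/2)·U + Σ_{a=1}^{n} y_a · ∂U/∂y_a. -/
open MeasureTheory

noncomputable section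

/-- `j_n = ((n-2)/2) U + Σ_{a=1}^n y_a ∂U/∂y_a`, where `y = (z,t)`. -/
def jlast (n : ℕ) (p : Pt n) : ℝ :=
  (((n : ℝ) - 2) / 2) * stdBubble n p +
    ((∑ i : Fin (n - 1), p.1 i * pd (ez n i) (stdBubble n) p) +
      p.2 * pd (et n) (stdBubble n) p)

/-!
On the half-space, `f_{A,B}(z, t)` is a quadratic form in `z` whose coefficients depend only on
`|z|` and `t`: the part of the Hessian of `U` proportional to `z_i z_j` sees only `B`, because the
first antisymmetry of `A` kills `A_{ikjl} z_i z_j z_k z_l`, and the part proportional to `δ_{ij}`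
sees only the Ricci contraction of `A`, because `B` is traceless. Both arrays that remain are
traceless, so averaging the form over all signed permutations of the coordinates of `z` gives zero
at every point. These are isometries of the half-space leaving `U` and `j_n` invariant, hence the
integral equals its own average, which vanishes.
-/

theorem integral_eq_zero_of_sum_comp_eq_zero {ι α E : Type*} [Fintype ι] [Nonempty ι]
    [MeasurableSpace α] {μ : Measure α} [NormedAddCommGroup E] [NormedSpace ℝ E]
    {T : ι → α ≃ᵐ α} (hT : ∀ i, MeasurePreserving (T i) μ μ) {f : α → E}
    (hf : ∀ᵐ x ∂μ, ∑ i, f (T i x) = 0) :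
    ∫ x, f x ∂μ = 0 := by
  by_cases hint : Integrable f μ
  · have hcard : (Fintype.card ι : ℝ) • ∫ x, f x ∂μ = 0 := calc
      (Fintype.card ι : ℝ) • ∫ x, f x ∂μ = ∑ i, ∫ x, f (T i x) ∂μ := by
        simp only [(hT _).integral_comp', Finset.sum_const, Finset.card_univ,
          Nat.cast_smul_eq_nsmul]
      _ = ∫ x, ∑ i, f (T i x) ∂μ :=
        (integral_finsetSum _ fun i _ ↦
          ((hT i).integrable_comp_emb (T i).measurableEmbedding).2 hint).symm
      _ = 0 := integral_eq_zero_of_ae hf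
    exact (smul_eq_zero.1 hcard).resolve_left (Nat.cast_ne_zero.2 Fintype.card_ne_zero)
  · exact integral_undef hint

section SignedPermutation

variable {ι : Type*} [Fintype ι]

/-- A signed permutation of the coordinates indexed by `ι`: a choice of signs together with a
permutation. Only the underlying finite type is used, to take averages over it. -/
abbrev SignedPerm (ι : Type*) :=
  (ι → ℤˣ) × Equiv.Perm ι

/-- The isometry of Euclidean space that permutes the coordinates and then changes their signs
according to a signed permutation. -/
def signedPermIsometry (g : SignedPerm ι) : EuclideanSpace ℝ ι ≃ₗᵢ[ℝ] EuclideanSpace ℝ ι :=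
  (LinearIsometryEquiv.piLpCongrLeft 2 ℝ ℝ g.2).trans
    (LinearIsometryEquiv.piLpCongrRight 2 fun i ↦
      ⟨DistribMulAction.toLinearEquiv ℝ ℝ (g.1 i), norm_units_zsmul (g.1 i)⟩)

theorem signedPermIsometry_apply (g : SignedPerm ι) (z : EuclideanSpace ℝ ι) (i : ι) :
    signedPermIsometry g z i = g.1 i • z (g.2.symm i) :=
  rfl

/-- The quadratic form `z ↦ ∑ k l, M k l * z k * z l` of a square array `M`. -/
def quadForm (M : ι → ι → ℝ) (z : EuclideanSpace ℝ ι) : ℝ :=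
  ∑ k, ∑ l, M k l * (z k * z l)

theorem quadForm_eq_zero_of_antisymm {M : ι → ι → ℝ} (hM : ∀ k l, M k l = -M l k)
    (z : EuclideanSpace ℝ ι) : quadForm M z = 0 := by
  have hneg : quadForm M z = -quadForm M z := by
    conv_lhs => rw [quadForm, Finset.sum_comm]
    simp only [quadForm, ← Finset.sum_neg_distrib]
    refine Finset.sum_congr rfl fun k _ ↦ Finset.sum_congr rfl fun l _ ↦ ?_
    rw [hM l k]
    ring
  linarith

variable [DecidableEq ι]

theorem sum_sum_mul_add_ite (M : ι → ι → ℝ) (z : EuclideanSpace ℝ ι) (a b : ℝ) :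
    ∑ i, ∑ j, M i j * (a * (z i * z j) + b * if i = j then 1 else 0) =
      a * quadForm M z + b * ∑ i, M i i := by
  have hdiag : b * ∑ i, M i i = ∑ i, ∑ j, M i j * (b * if i = j then 1 else 0) := by
    simp [Finset.mul_sum, mul_comm]
  simp only [hdiag, quadForm, mul_add, Finset.sum_add_distrib, Finset.mul_sum,
    mul_left_comm (M _ _) a]

theorem sum_signedPerm_mul_of_ne (z : EuclideanSpace ℝ ι) {k l : ι} (hkl : k ≠ l) :
    ∑ g : SignedPerm ι, signedPermIsometry g z k * signedPermIsometry g z l = 0 := by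
  let flip : Equiv.Perm (SignedPerm ι) :=
    (Equiv.mulRight (Pi.mulSingle k (-1))).prodCongr (Equiv.refl _)
  have hflip (g : SignedPerm ι) :
      signedPermIsometry (flip g) z k * signedPermIsometry (flip g) z l =
        -(signedPermIsometry g z k * signedPermIsometry g z l) := by
    simp [flip, signedPermIsometry_apply, Pi.mulSingle_eq_of_ne hkl.symm]
  have hsum := Equiv.sum_comp flip fun g ↦ signedPermIsometry g z k * signedPermIsometry g z l
  simp only [hflip, Finset.sum_neg_distrib] at hsum
  linarith

theorem sum_signedPerm_mul_self (z : EuclideanSpace ℝ ι) (k l : ι) :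
    ∑ g : SignedPerm ι, signedPermIsometry g z k * signedPermIsometry g z k =
      ∑ g : SignedPerm ι, signedPermIsometry g z l * signedPermIsometry g z l := by
  let swap : Equiv.Perm (SignedPerm ι) :=
    (Equiv.refl _).prodCongr (Equiv.mulLeft (Equiv.swap k l))
  have hswap (g : SignedPerm ι) :
      signedPermIsometry (swap g) z k * signedPermIsometry (swap g) z k =
        signedPermIsometry g z l * signedPermIsometry g z l := by
    simp [swap, Equiv.Perm.mul_def, signedPermIsometry_apply, smul_mul_smul_comm,
      Int.units_mul_self]
  rw [← Equiv.sum_comp swap]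
  exact Finset.sum_congr rfl fun g _ ↦ hswap g

theorem sum_quadForm_signedPerm_eq_zero {M : ι → ι → ℝ} (hM : ∑ k, M k k = 0)
    (z : EuclideanSpace ℝ ι) :
    ∑ g : SignedPerm ι, quadForm M (signedPermIsometry g z) = 0 := by
  have hdiag (k : ι) :
      ∑ l, M k l * ∑ g : SignedPerm ι, signedPermIsometry g z k * signedPermIsometry g z l =
        M k k * ∑ g : SignedPerm ι, signedPermIsometry g z k * signedPermIsometry g z k :=
    Fintype.sum_eq_single k fun l hlk ↦ by rw [sum_signedPerm_mul_of_ne z hlk.symm, mul_zero]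
  have hsum : ∑ g : SignedPerm ι, quadForm M (signedPermIsometry g z) =
      ∑ k, M k k * ∑ g : SignedPerm ι, signedPermIsometry g z k * signedPermIsometry g z k := by
    simp only [quadForm, ← hdiag, Finset.mul_sum]
    rw [Finset.sum_comm]
    exact Finset.sum_congr rfl fun k _ ↦ Finset.sum_comm
  rw [hsum]
  cases isEmpty_or_nonempty ι with
  | inl _ => exact Finset.sum_of_isEmpty _
  | inr h =>
    obtain ⟨k₀⟩ := h
    simp only [sum_signedPerm_mul_self z _ k₀, ← Finset.sum_mul, hM, zero_mul]

end SignedPermutation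

section PoleDistance

open scoped InnerProductSpace

variable {E : Type*} [NormedAddCommGroup E]

/-- The squared distance `(1 + t)² + |z|²` from `(z, t)` to the pole `(0, -1)`, of which the
standard bubble is a power. -/
def poleDistSq (p : E × ℝ) : ℝ :=
  (1 + p.2) ^ 2 + ‖p.1‖ ^ 2

theorem poleDistSq_pos {p : E × ℝ} (hp : 0 < p.2) : 0 < poleDistSq p := by
  unfold poleDistSq
  positivity

variable [InnerProductSpace ℝ E]

/-- The linear form `⟪v, ·⟫` of the Euclidean inner product on `E × ℝ`, which is not an
`InnerProductSpace` because the product carries the sup norm. -/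
def prodInner (v : E × ℝ) : E × ℝ →L[ℝ] ℝ :=
  innerSL ℝ v.1 ∘L ContinuousLinearMap.fst ℝ E ℝ + v.2 • ContinuousLinearMap.snd ℝ E ℝ

theorem prodInner_apply (v w : E × ℝ) : prodInner v w = ⟪v.1, w.1⟫_ℝ + v.2 * w.2 :=
  rfl

theorem prodInner_comm (v w : E × ℝ) : prodInner v w = prodInner w v := by
  simp only [prodInner_apply, real_inner_comm, mul_comm]

theorem hasFDerivAt_poleDistSq (p : E × ℝ) :
    HasFDerivAt poleDistSq ((2 : ℝ) • prodInner (p + (0, 1))) p := by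
  have hsnd : HasFDerivAt (fun q : E × ℝ ↦ 1 + q.2) (ContinuousLinearMap.snd ℝ E ℝ) p :=
    hasFDerivAt_snd.const_add 1
  refine ((hsnd.pow 2).add hasFDerivAt_fst.norm_sq).congr_fderiv ?_
  ext v
  · simp [prodInner_apply]
  · simp [prodInner_apply, add_comm, mul_add]

theorem hasFDerivAt_poleDistSq_rpow {p : E × ℝ} (hp : poleDistSq p ≠ 0) (c : ℝ) :
    HasFDerivAt (fun q ↦ poleDistSq q ^ c)
      ((2 * c * poleDistSq p ^ (c - 1)) • prodInner (p + (0, 1))) p := by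
  refine ((hasFDerivAt_poleDistSq p).rpow_const (Or.inl hp)).congr_fderiv ?_
  rw [smul_smul]
  congr 1
  ring

theorem pd_poleDistSq_rpow {p : E × ℝ} (hp : poleDistSq p ≠ 0) (c : ℝ) (v : E × ℝ) :
    pd v (fun q ↦ poleDistSq q ^ c) p =
      2 * c * poleDistSq p ^ (c - 1) * prodInner (p + (0, 1)) v := by
  rw [pd, (hasFDerivAt_poleDistSq_rpow hp c).fderiv]
  rfl

theorem pd_pd_poleDistSq_rpow {p : E × ℝ} (hp : poleDistSq p ≠ 0) (c : ℝ) (v w : E × ℝ) :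
    pd v (pd w fun q ↦ poleDistSq q ^ c) p =
      4 * c * (c - 1) * poleDistSq p ^ (c - 2) *
          (prodInner (p + (0, 1)) v * prodInner (p + (0, 1)) w) +
        2 * c * poleDistSq p ^ (c - 1) * prodInner v w := by
  have hpd : pd w (fun q ↦ poleDistSq q ^ c) =ᶠ[nhds p]
      fun q ↦ 2 * c * (poleDistSq q ^ (c - 1) * prodInner w (q + (0, 1))) := by
    filter_upwards [(hasFDerivAt_poleDistSq p).continuousAt.eventually_ne hp] with q hq
    rw [pd_poleDistSq_rpow hq, prodInner_comm]
    ring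
  have hlin : HasFDerivAt (fun q ↦ prodInner w (q + (0, 1))) (prodInner w) p :=
    (prodInner w).hasFDerivAt.comp p ((hasFDerivAt_id p).add_const (0, 1))
  have hprod : HasFDerivAt
      (fun q ↦ 2 * c * (poleDistSq q ^ (c - 1) * prodInner w (q + (0, 1)))) _ p :=
    ((hasFDerivAt_poleDistSq_rpow hp (c - 1)).mul hlin).const_mul (2 * c)
  rw [pd, hpd.fderiv_eq, hprod.fderiv]
  simp only [smul_apply, add_apply, smul_eq_mul, prodInner_comm w, show c - 1 - 1 = c - 2 by ring]
  ring

end PoleDistance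

section Curvature

variable {ι : Type*} [Fintype ι]

/-- The bilinear form `(i, j) ↦ ∑ k l, A i k j l * z k * z l` of a curvature-type tensor `A` in the
direction `z`. -/
def curvatureForm (A : ι → ι → ι → ι → ℝ) (z : EuclideanSpace ℝ ι) (i j : ι) : ℝ :=
  ∑ k, ∑ l, A i k j l * z k * z l

/-- The Ricci contraction of a curvature-type tensor, over its first and third indices. -/
def ricci (A : ι → ι → ι → ι → ℝ) (k l : ι) : ℝ :=
  ∑ i, A i k i l

theorem quadForm_curvatureForm_eq_zero {A : ι → ι → ι → ι → ℝ}
    (hA : ∀ i k j l, A i k j l = -A k i j l) (z : EuclideanSpace ℝ ι) :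
    quadForm (curvatureForm A z) z = 0 := by
  have hsum : quadForm (curvatureForm A z) z =
      ∑ j, ∑ l, quadForm (fun i k ↦ A i k j l) z * (z j * z l) := by
    simp only [quadForm, curvatureForm, Finset.sum_mul]
    rw [Finset.sum_comm]
    refine Finset.sum_congr rfl fun j _ ↦ ?_
    rw [Finset.sum_comm_cycle]
    refine Finset.sum_congr rfl fun l _ ↦ Finset.sum_congr rfl fun i _ ↦
      Finset.sum_congr rfl fun k _ ↦ ?_
    ring
  simp only [hsum, quadForm_eq_zero_of_antisymm (fun i k ↦ hA i k _ _), zero_mul,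
    Finset.sum_const_zero]

theorem sum_curvatureForm_self (A : ι → ι → ι → ι → ℝ) (z : EuclideanSpace ℝ ι) :
    ∑ i, curvatureForm A z i i = quadForm (ricci A) z := by
  simp only [curvatureForm, quadForm, ricci, Finset.sum_mul, mul_assoc]
  rw [Finset.sum_comm]
  exact Finset.sum_congr rfl fun k _ ↦ Finset.sum_comm

end Curvature

section Bubble

variable {n : ℕ}

/-- The exponent `-(n - 2) / 2` for which the bubble is `poleDistSq ^ bubbleExp n`. -/
def bubbleExp (n : ℕ) : ℝ :=
  -(((n : ℝ) - 2) / 2)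

theorem stdBubble_eq_poleDistSq_rpow (n : ℕ) :
    stdBubble n = fun p ↦ poleDistSq p ^ bubbleExp n :=
  rfl

theorem prodInner_add_ez (p : Pt n) (i : Fin (n - 1)) :
    prodInner (p + (0, 1)) (ez n i) = p.1 i := by
  simp [prodInner_apply, ez, EuclideanSpace.inner_single_right]

theorem prodInner_add_et (p : Pt n) : prodInner (p + (0, 1)) (et n) = p.2 + 1 := by
  simp [prodInner_apply, et]

theorem prodInner_ez_ez (i j : Fin (n - 1)) :
    prodInner (ez n i) (ez n j) = if i = j then 1 else 0 := by
  simp [prodInner_apply, ez, EuclideanSpace.inner_single_right, eq_comm]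

theorem jlast_eq {p : Pt n} (hp : p ∈ upperHalf n) :
    jlast n p = bubbleExp n * poleDistSq p ^ (bubbleExp n - 1) * (‖p.1‖ ^ 2 + p.2 ^ 2 - 1) := by
  have hpos : 0 < poleDistSq p := poleDistSq_pos hp
  have hpow : poleDistSq p ^ bubbleExp n =
      poleDistSq p ^ (bubbleExp n - 1) * ((1 + p.2) ^ 2 + ‖p.1‖ ^ 2) := by
    conv_lhs => rw [← sub_add_cancel (bubbleExp n) 1, Real.rpow_add_one hpos.ne']
    rfl
  have hsum (a : ℝ) : ∑ i, p.1 i * (a * p.1 i) = a * ‖p.1‖ ^ 2 := by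
    rw [EuclideanSpace.real_norm_sq_eq, Finset.mul_sum]
    exact Finset.sum_congr rfl fun i _ ↦ by ring
  simp only [jlast, stdBubble_eq_poleDistSq_rpow, pd_poleDistSq_rpow hpos.ne', prodInner_add_ez,
    prodInner_add_et, hsum, hpow, show ((n : ℝ) - 2) / 2 = -bubbleExp n by simp [bubbleExp]]
  ring

theorem pd_pd_stdBubble {p : Pt n} (hp : p ∈ upperHalf n) (i j : Fin (n - 1)) :
    pd (ez n i) (pd (ez n j) (stdBubble n)) p =
      4 * bubbleExp n * (bubbleExp n - 1) * poleDistSq p ^ (bubbleExp n - 2) * (p.1 i * p.1 j) +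
        2 * bubbleExp n * poleDistSq p ^ (bubbleExp n - 1) * if i = j then 1 else 0 := by
  rw [stdBubble_eq_poleDistSq_rpow, pd_pd_poleDistSq_rpow (poleDistSq_pos hp).ne',
    prodInner_add_ez, prodInner_add_ez, prodInner_ez_ez]

theorem fAB_eq {A : Fin (n - 1) → Fin (n - 1) → Fin (n - 1) → Fin (n - 1) → ℝ}
    {B : Fin (n - 1) → Fin (n - 1) → ℝ} (hA : ∀ i k j l, A i k j l = -A k i j l)
    (hB : ∑ i, B i i = 0) {p : Pt n} (hp : p ∈ upperHalf n) :
    fAB n A B p =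
      2 / 3 * bubbleExp n * poleDistSq p ^ (bubbleExp n - 1) * quadForm (ricci A) p.1 +
        4 * bubbleExp n * (bubbleExp n - 1) * poleDistSq p ^ (bubbleExp n - 2) * p.2 ^ 2 *
          quadForm B p.1 := by
  set K : Fin (n - 1) → Fin (n - 1) → ℝ := fun i j ↦
    1 / 3 * curvatureForm A p.1 i j + B i j * p.2 ^ 2 with hK
  have hquad : quadForm K p.1 = p.2 ^ 2 * quadForm B p.1 := calc
    quadForm K p.1 =
        1 / 3 * quadForm (curvatureForm A p.1) p.1 + p.2 ^ 2 * quadForm B p.1 := by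
      simp only [quadForm, hK, Finset.mul_sum, ← Finset.sum_add_distrib]
      refine Finset.sum_congr rfl fun i _ ↦ Finset.sum_congr rfl fun j _ ↦ ?_
      ring
    _ = p.2 ^ 2 * quadForm B p.1 := by
      rw [quadForm_curvatureForm_eq_zero hA, mul_zero, zero_add]
  have htrace : ∑ i, K i i = 1 / 3 * quadForm (ricci A) p.1 := by
    rw [Finset.sum_add_distrib, ← Finset.mul_sum, ← Finset.sum_mul, sum_curvatureForm_self, hB,
      zero_mul, add_zero]
  calc
    fAB n A B p = ∑ i, ∑ j, K i j * pd (ez n i) (pd (ez n j) (stdBubble n)) p := rfl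
    _ = _ := by
      simp only [pd_pd_stdBubble hp, sum_sum_mul_add_ite, hquad, htrace]
      ring

end Bubble

section HorizontalIsometry

variable {n : ℕ}

theorem measurableSet_upperHalf (n : ℕ) : MeasurableSet (upperHalf n) :=
  measurableSet_lt measurable_const measurable_snd

variable (T : EuclideanSpace ℝ (Fin (n - 1)) ≃ₗᵢ[ℝ] EuclideanSpace ℝ (Fin (n - 1)))

/-- The map `(z, t) ↦ (T z, t)` of `Pt n` induced by a linear isometry `T` of `ℝ^{n-1}`. It
preserves the half-space, its volume, and the weights against which `fAB` is integrated. -/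
def horizontalIsometry : Pt n ≃ᵐ Pt n :=
  T.toMeasurableEquiv.prodCongr (MeasurableEquiv.refl ℝ)

theorem horizontalIsometry_apply (p : Pt n) : horizontalIsometry T p = (T p.1, p.2) :=
  rfl

theorem horizontalIsometry_mem_upperHalf {p : Pt n} (hp : p ∈ upperHalf n) :
    horizontalIsometry T p ∈ upperHalf n :=
  hp

theorem measurePreserving_horizontalIsometry :
    MeasurePreserving (horizontalIsometry T) (volume.restrict (upperHalf n))
      (volume.restrict (upperHalf n)) :=
  (T.measurePreserving.prod (MeasurePreserving.id volume)).restrict_preimage_emb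
    (horizontalIsometry T).measurableEmbedding (upperHalf n)

theorem poleDistSq_horizontalIsometry (p : Pt n) :
    poleDistSq (horizontalIsometry T p) = poleDistSq p := by
  simp only [poleDistSq, horizontalIsometry_apply, T.norm_map]

theorem stdBubble_horizontalIsometry (p : Pt n) :
    stdBubble n (horizontalIsometry T p) = stdBubble n p := by
  simp only [stdBubble_eq_poleDistSq_rpow, poleDistSq_horizontalIsometry]

theorem jlast_horizontalIsometry {p : Pt n} (hp : p ∈ upperHalf n) :
    jlast n (horizontalIsometry T p) = jlast n p := by
  simp only [jlast_eq hp, jlast_eq (horizontalIsometry_mem_upperHalf T hp),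
    poleDistSq_horizontalIsometry]
  simp only [horizontalIsometry_apply, T.norm_map]

end HorizontalIsometry

theorem sum_fAB_signedPerm_eq_zero {n : ℕ}
    {A : Fin (n - 1) → Fin (n - 1) → Fin (n - 1) → Fin (n - 1) → ℝ}
    {B : Fin (n - 1) → Fin (n - 1) → ℝ} (hA : ∀ i k j l, A i k j l = -A k i j l)
    (hR : ∑ k, ricci A k k = 0) (hB : ∑ i, B i i = 0) {p : Pt n} (hp : p ∈ upperHalf n) :
    ∑ g, fAB n A B (horizontalIsometry (signedPermIsometry g) p) = 0 := by
  simp only [fAB_eq hA hB (horizontalIsometry_mem_upperHalf _ hp), poleDistSq_horizontalIsometry]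
  simp only [horizontalIsometry_apply, Finset.sum_add_distrib, ← Finset.mul_sum,
    sum_quadForm_signedPerm_eq_zero hR, sum_quadForm_signedPerm_eq_zero hB, mul_zero, add_zero]

/-- Pitfall: for a weight `G` such that `fAB n A B * G` is not integrable, the integral is `0` by
the Bochner convention. -/
theorem stmt8_general (n : ℕ)
    (A : Fin (n - 1) → Fin (n - 1) → Fin (n - 1) → Fin (n - 1) → ℝ)
    (B : Fin (n - 1) → Fin (n - 1) → ℝ)
    (hA1 : ∀ i k j l, A i k j l = -A k i j l)
    (hA3 : (∑ i : Fin (n - 1), ∑ k : Fin (n - 1), A i k i k) = 0)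
    (hB : (∑ i : Fin (n - 1), B i i) = 0)
    (G : Pt n → ℝ)
    (hG : ∀ T : EuclideanSpace ℝ (Fin (n - 1)) ≃ₗᵢ[ℝ] EuclideanSpace ℝ (Fin (n - 1)),
      ∀ p ∈ upperHalf n, G (horizontalIsometry T p) = G p) :
    (∫ p in upperHalf n, fAB n A B p * G p) = 0 := by
  have hR : ∑ k, ricci A k k = 0 := Finset.sum_comm.trans hA3
  refine integral_eq_zero_of_sum_comp_eq_zero
    (fun g ↦ measurePreserving_horizontalIsometry (signedPermIsometry g))
    (ae_restrict_of_forall_mem (measurableSet_upperHalf n) fun p hp ↦ ?_)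
  simp only [hG _ p hp, ← Finset.sum_mul, sum_fAB_signedPerm_eq_zero hA1 hR hB hp, zero_mul]

/-- under the curvature-type symmetries of `A` and trace conditions,
`∫ f_{A,B} U = 0` and `∫ f_{A,B} j_n = 0`. -/
theorem stmt8 (n : ℕ) (hn : 5 ≤ n)
    (A : Fin (n - 1) → Fin (n - 1) → Fin (n - 1) → Fin (n - 1) → ℝ)
    (B : Fin (n - 1) → Fin (n - 1) → ℝ)
    (hA1 : ∀ i k j l, A i k j l = -A k i j l)
    (hA2 : ∀ i k j l, A i k j l = -A i k l j)
    (hA3 : (∑ i : Fin (n - 1), ∑ k : Fin (n - 1), A i k i k) = 0)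
    (hB : (∑ i : Fin (n - 1), B i i) = 0) :
    (∫ p in upperHalf n, fAB n A B p * stdBubble n p) = 0 ∧
    (∫ p in upperHalf n, fAB n A B p * jlast n p) = 0 :=
  ⟨stmt8_general n A B hA1 hA3 hB _ fun T p _ ↦ stdBubble_horizontalIsometry T p,
    stmt8_general n A B hA1 hA3 hB _ fun T _ hp ↦ jlast_horizontalIsometry T hp⟩
end
end
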